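/- arXiv:2306.08104 — 2 statements merged into one kernel-verified Lean document; each statement's English description precedes it below -/
import Mathlib

section
/- Let n ≥ 1, r ≥ 2, and let J ⊊ S = ℂ[α_0,…,α_n] be a proper homogeneous ideal such that H_{S/J}(k) ≤ H_{S/J}(k+1) for every k ≥ 0 and H_{S/J}(k) = r for all sufficiently large k. Let a be the smallest integer with dim_ℂ S_a ≥ r and b the largest integer with H_{S/J}(b) ≠ r. For a ≤ k ≤ b let n_k be the smallest integer such that W_k := (J_k)^⊥ + span(the n_k largest monomials of S_k with respect to the fixed monomial order) has dimension r, and define the graded subspace I ⊆ S by I_k = 0 for k < a, I_k = (W_k)^⊥ for a ≤ k ≤ b, and I_k = J_k for k > b. Then I is a homogeneous ideal of S, and I_k = J_k for every k ≥ b+1. -/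
/-!
The only nontrivial point is that `α_i I_k ⊆ I_{k+1}` when `a ≤ k` and `k + 1 ≤ b`. Write `T_k` for
the chosen top segment in degree `k`. Then `I_k = (W_k)^⊥` consists of those `f ∈ J_k` whose
coefficients on `T_k` vanish.

For a finite set `T` of degree-`k` monomials let `ρ_k(T)` be the rank of the coefficient map
`J_k → ℂ^T`. Duality and rank-nullity give
`dim (J_k^⊥ + span T) = H_{S/J}(k) + ρ_k(T)` (`finrank_perp_sup_spanMon`).

Let `f ∈ I_k` and suppose `α_i f` has a nonzero coefficient at some `m ∈ T_{k+1}`. Then `m = α_i m'`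
with `m'` in the support of `f`, so `m' ∉ T_k` and every `t ∈ T_k` is larger than `m'`. Put
`A = {u ∈ T_{k+1} : u > m}`. This is a top segment with fewer elements than `T_{k+1}`, so by
minimality `H(k+1) + ρ_{k+1}(A) < r`. On the other hand `α_i T_k ⊆ A`, and multiplication by `α_i`
carries `J_k` into `J_{k+1}`, whence `ρ_k(T_k) ≤ ρ_{k+1}(A)` (`rank_le_of_shift`). Together with
`H(k) ≤ H(k+1)` this yields `r = H(k) + ρ_k(T_k) ≤ H(k+1) + ρ_{k+1}(A) < r`, a contradiction.
-/

open MvPolynomial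

noncomputable section

/-- The standard graded polynomial ring `S = ℂ[α_0,…,α_n]`. -/
abbrev PS (n : ℕ) : Type := MvPolynomial (Fin (n + 1)) ℂ

/-- The space `S_k` of homogeneous polynomials of degree `k`. -/
def hsub (n k : ℕ) : Submodule ℂ (PS n) := homogeneousSubmodule (Fin (n + 1)) ℂ k

/-- The degree-`k` graded piece `J_k = J ∩ S_k` of an ideal. -/
def idealPiece (n : ℕ) (J : Ideal (PS n)) (k : ℕ) : Submodule ℂ (PS n) :=
  Submodule.restrictScalars ℂ J ⊓ hsub n k

/-- A homogeneous ideal: `J = ⊕_k J_k`. -/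
def IsHomog (n : ℕ) (J : Ideal (PS n)) : Prop :=
  Submodule.restrictScalars ℂ J = ⨆ k : ℕ, idealPiece n J k

/-- The Hilbert function of `S/J`: `H_{S/J}(k) = dim S_k − dim J_k`. -/
def HF (n : ℕ) (J : Ideal (PS n)) (k : ℕ) : ℕ :=
  Module.finrank ℂ ↥(hsub n k) - Module.finrank ℂ ↥(idealPiece n J k)

/-- Pairing against `f` for the bilinear form making the monomials orthonormal:
`g ↦ ⟨g, f⟩ = ∑_u g_u f_u`. -/
def pairLM (n : ℕ) (f : PS n) : PS n →ₗ[ℂ] ℂ :=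
  ∑ u ∈ f.support, f.coeff u • lcoeff ℂ u

/-- The orthogonal complement of `U` inside `S_k` with respect to the bilinear form making the
monomials an orthonormal basis. -/
def perp (n k : ℕ) (U : Submodule ℂ (PS n)) : Submodule ℂ (PS n) :=
  hsub n k ⊓ ⨅ f ∈ U, LinearMap.ker (pairLM n f)

/-- The span of a finite set of monomials. -/
def spanMon (n : ℕ) (M : Finset (Fin (n + 1) →₀ ℕ)) : Submodule ℂ (PS n) :=
  Submodule.span ℂ {p : PS n | ∃ u ∈ M, p = monomial u 1}

/-- `M` is the set of the `|M|` largest degree-`k` monomials: all its elements have degree `k`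
and dominate every degree-`k` monomial outside of `M`. -/
def TopSeg (n k : ℕ) (lo : LinearOrder (Fin (n + 1) →₀ ℕ))
    (M : Finset (Fin (n + 1) →₀ ℕ)) : Prop :=
  (∀ u ∈ M, ∑ j, u j = k) ∧
    ∀ u ∈ M, ∀ v : Fin (n + 1) →₀ ℕ, (∑ j, v j = k) → v ∉ M → lo.lt v u

/-- `W_k = (J_k)^⊥ + span(the given monomials in degree k)`. -/
def Wsp (n : ℕ) (J : Ideal (PS n)) (M : ℕ → Finset (Fin (n + 1) →₀ ℕ)) (k : ℕ) :
    Submodule ℂ (PS n) :=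
  perp n k (idealPiece n J k) ⊔ spanMon n (M k)

/-- The degree-`k` piece of the ideal `I`: `0` for `k < a`, `(W_k)^⊥` for `a ≤ k ≤ b`,
and `J_k` for `k > b`. -/
def Ipiece (n : ℕ) (J : Ideal (PS n)) (M : ℕ → Finset (Fin (n + 1) →₀ ℕ)) (a b k : ℕ) :
    Submodule ℂ (PS n) :=
  (⨆ _ : a ≤ k ∧ k ≤ b, perp n k (Wsp n J M k)) ⊔ (⨆ _ : b < k, idealPiece n J k)

/-! ### Homogeneous polynomials and the monomial pairing -/

lemma hsub_finite (n k : ℕ) : Module.Finite ℂ (hsub n k) :=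
  Module.Finite.iff_fg.mpr (homogeneousSubmodule_fg (Fin (n + 1)) ℂ k)

lemma mem_hsub_iff (n k : ℕ) (p : PS n) :
    p ∈ hsub n k ↔ ∀ u, p.coeff u ≠ 0 → ∑ j, u j = k := by
  have h : p ∈ hsub n k ↔ p.IsHomogeneous k := Iff.rfl
  rw [h]
  constructor
  · intro hp u hu
    by_contra hne
    exact hu (hp.coeff_eq_zero (by rwa [Finsupp.degree_eq_sum]))
  · intro hp u hu
    have hw := hp u hu
    rw [← Finsupp.degree_eq_sum] at hw
    exact (congrFun (congrArg _ Finsupp.degree_eq_weight_one) u).symm.trans hw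

lemma monomial_mem_hsub (n k : ℕ) (u : Fin (n + 1) →₀ ℕ) (hu : ∑ j, u j = k) :
    (monomial u 1 : PS n) ∈ hsub n k := by
  classical
  rw [mem_hsub_iff]
  intro v hv
  rw [coeff_monomial] at hv
  have : u = v := by by_contra h; simp [h] at hv
  rwa [← this]

/-- The pairing may be computed over any finite set of monomials containing the support of one
argument. -/
lemma pairLM_apply (n : ℕ) (f g : PS n) (s : Finset (Fin (n + 1) →₀ ℕ)) (hs : f.support ⊆ s) :
    pairLM n f g = ∑ u ∈ s, f.coeff u * g.coeff u := by
  rw [pairLM, LinearMap.sum_apply]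
  simp only [LinearMap.smul_apply, lcoeff_apply, smul_eq_mul]
  refine Finset.sum_subset hs ?_
  intro u _ hu
  rw [notMem_support_iff.mp hu, zero_mul]

lemma pairLM_comm (n : ℕ) (f g : PS n) : pairLM n f g = pairLM n g f := by
  classical
  rw [pairLM_apply n f g (f.support ∪ g.support) Finset.subset_union_left,
    pairLM_apply n g f (f.support ∪ g.support) Finset.subset_union_right]
  exact Finset.sum_congr rfl fun u _ => mul_comm _ _

lemma pairLM_monomial (n : ℕ) (u : Fin (n + 1) →₀ ℕ) (g : PS n) :
    pairLM n (monomial u 1) g = g.coeff u := by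
  classical
  rw [pairLM_apply n _ g {u} support_monomial_subset]
  simp

/-- The restriction to `S_k` of the bilinear form for which the monomials are orthonormal. -/
def pairB (n k : ℕ) : LinearMap.BilinForm ℂ (hsub n k) :=
  LinearMap.mk₂ ℂ (fun f g => pairLM n f g)
    (fun f f' g => by
      rw [pairLM_comm n (f + f' : hsub n k), pairLM_comm n f, pairLM_comm n f']; simp)
    (fun c f g => by
      rw [pairLM_comm n (c • f : hsub n k), pairLM_comm n f]; simp)
    (fun f g g' => by simp)
    (fun c f g => by simp)

lemma pairB_apply (n k : ℕ) (f g : hsub n k) : pairB n k f g = pairLM n f g := rfl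

lemma pairB_nondegenerate (n k : ℕ) : (pairB n k).Nondegenerate := by
  have key : ∀ y : hsub n k, (∀ x, pairB n k x y = 0) → y = 0 := by
    intro y hy
    ext u
    by_contra hu
    have hu' := (mem_hsub_iff n k y).mp y.2 u hu
    have := hy ⟨_, monomial_mem_hsub n k u hu'⟩
    rw [pairB_apply, pairLM_monomial] at this
    exact hu this
  refine ⟨fun x hx => key x fun y => ?_, key⟩
  rw [pairB_apply, pairLM_comm]
  exact hx y

lemma mem_perp_iff (n k : ℕ) (U : Submodule ℂ (PS n)) (g : PS n) :
    g ∈ perp n k U ↔ g ∈ hsub n k ∧ ∀ f ∈ U, pairLM n f g = 0 := by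
  simp [perp, Submodule.mem_iInf]

lemma perp_le (n k : ℕ) (U : Submodule ℂ (PS n)) : perp n k U ≤ hsub n k := inf_le_left

lemma perp_eq_map (n k : ℕ) (U : Submodule ℂ (PS n)) (hU : U ≤ hsub n k) :
    perp n k U = ((pairB n k).orthogonal (U.comap (hsub n k).subtype)).map (hsub n k).subtype := by
  ext g
  rw [mem_perp_iff, Submodule.mem_map]
  constructor
  · rintro ⟨hg, h⟩
    exact ⟨⟨g, hg⟩, fun f hf => h f hf, rfl⟩
  · rintro ⟨g, hg, rfl⟩
    exact ⟨g.2, fun f hf => hg ⟨f, hU hf⟩ hf⟩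

lemma perp_perp (n k : ℕ) (U : Submodule ℂ (PS n)) (hU : U ≤ hsub n k) :
    perp n k (perp n k U) = U := by
  have := hsub_finite n k
  have hrefl : (pairB n k).IsRefl := fun f g h => by
    rw [pairB_apply, pairLM_comm]; exact h
  rw [perp_eq_map n k _ (perp_le n k U), perp_eq_map n k U hU,
    Submodule.comap_map_eq_of_injective (hsub n k).subtype_injective,
    LinearMap.BilinForm.orthogonal_orthogonal (pairB_nondegenerate n k) hrefl,
    Submodule.map_comap_subtype, inf_eq_right.mpr hU]

lemma finrank_perp_add (n k : ℕ) (U : Submodule ℂ (PS n)) (hU : U ≤ hsub n k) :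
    Module.finrank ℂ (perp n k U) + Module.finrank ℂ U = Module.finrank ℂ (hsub n k) := by
  have := hsub_finite n k
  have h1 : Module.finrank ℂ (perp n k U) =
      Module.finrank ℂ ((pairB n k).orthogonal (U.comap (hsub n k).subtype)) := by
    rw [perp_eq_map n k U hU]
    exact Submodule.finrank_map_subtype_eq _ _
  have h2 : Module.finrank ℂ (U.comap (hsub n k).subtype) = Module.finrank ℂ U :=
    (Submodule.comapSubtypeEquivOfLe hU).finrank_eq
  have h3 := Submodule.finrank_le (U.comap (hsub n k).subtype)
  rw [h1, LinearMap.BilinForm.finrank_orthogonal (pairB_nondegenerate n k)]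
  omega

/-! ### Dimension of `(J_k)^⊥` plus a span of monomials -/

/-- The map recording the coefficients of a polynomial at the monomials of `T`. -/
def resT (n : ℕ) (T : Finset (Fin (n + 1) →₀ ℕ)) : PS n →ₗ[ℂ] (T → ℂ) :=
  LinearMap.pi fun u => lcoeff ℂ (u : Fin (n + 1) →₀ ℕ)

lemma resT_apply (n : ℕ) (T : Finset (Fin (n + 1) →₀ ℕ)) (f : PS n) (u : T) :
    resT n T f u = f.coeff u := rfl

lemma spanMon_le_hsub (n k : ℕ) (T : Finset (Fin (n + 1) →₀ ℕ)) (hT : ∀ u ∈ T, ∑ j, u j = k) :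
    spanMon n T ≤ hsub n k := by
  rw [spanMon, Submodule.span_le]
  rintro _ ⟨u, hu, rfl⟩
  exact monomial_mem_hsub n k u (hT u hu)

lemma idealPiece_le (n k : ℕ) (J : Ideal (PS n)) : idealPiece n J k ≤ hsub n k := inf_le_right

/-- `(U^⊥ + span T)^⊥` is the space of elements of `U` without terms in `T`. -/
lemma perp_sup_spanMon (n k : ℕ) (U : Submodule ℂ (PS n)) (hU : U ≤ hsub n k)
    (T : Finset (Fin (n + 1) →₀ ℕ)) :
    perp n k (perp n k U ⊔ spanMon n T) = U ⊓ LinearMap.ker (resT n T) := by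
  ext g
  rw [Submodule.mem_inf, LinearMap.mem_ker]
  constructor
  · intro hg
    rw [mem_perp_iff] at hg
    refine ⟨?_, ?_⟩
    · rw [← perp_perp n k U hU, mem_perp_iff]
      exact ⟨hg.1, fun f hf => hg.2 f (Submodule.mem_sup_left hf)⟩
    · ext u
      have := hg.2 (monomial (u : Fin (n + 1) →₀ ℕ) 1)
        (Submodule.mem_sup_right (Submodule.subset_span ⟨u, u.2, rfl⟩))
      rwa [pairLM_monomial] at this
  · rintro ⟨hg, hT⟩
    rw [mem_perp_iff]
    refine ⟨hU hg, fun f hf => ?_⟩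
    have hle : perp n k U ⊔ spanMon n T ≤ LinearMap.ker (pairLM n g) := by
      refine sup_le (fun f hf => ?_) ?_
      · rw [LinearMap.mem_ker]
        exact ((mem_perp_iff n k U f).mp hf).2 g hg
      · rw [spanMon, Submodule.span_le]
        rintro _ ⟨u, hu, rfl⟩
        rw [SetLike.mem_coe, LinearMap.mem_ker, pairLM_comm, pairLM_monomial]
        exact congrFun hT ⟨u, hu⟩
    rw [pairLM_comm]
    exact hle hf

/-- Adding the monomials of `T` to `(J_k)^⊥` raises the dimension by the rank of the coefficient
map `J_k → ℂ^T`. -/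
lemma finrank_perp_sup_spanMon (n k : ℕ) (J : Ideal (PS n)) (T : Finset (Fin (n + 1) →₀ ℕ))
    (hT : ∀ u ∈ T, ∑ j, u j = k) :
    Module.finrank ℂ ↥(perp n k (idealPiece n J k) ⊔ spanMon n T) =
      HF n J k + Module.finrank ℂ ((idealPiece n J k).map (resT n T)) := by
  have := hsub_finite n k
  have hJ := idealPiece_le n k J
  have : Module.Finite ℂ (idealPiece n J k) := Submodule.finiteDimensional_of_le hJ
  have h1 := finrank_perp_add n k (perp n k (idealPiece n J k) ⊔ spanMon n T)
    (sup_le (perp_le n k _) (spanMon_le_hsub n k T hT))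
  rw [perp_sup_spanMon n k _ hJ] at h1
  have h2 := ((resT n T).domRestrict (idealPiece n J k)).finrank_range_add_finrank_ker
  rw [LinearMap.range_domRestrict, LinearMap.ker_domRestrict] at h2
  have h3 : Module.finrank ℂ ((LinearMap.ker (resT n T)).comap (idealPiece n J k).subtype) =
      Module.finrank ℂ ↥(idealPiece n J k ⊓ LinearMap.ker (resT n T)) := by
    rw [← Submodule.map_comap_subtype]
    exact (Submodule.finrank_map_subtype_eq _ _).symm
  have h4 := Submodule.finrank_mono hJ
  rw [HF]
  change _ + Module.finrank ℂ ((LinearMap.ker (resT n T)).comap (idealPiece n J k).subtype) = _ at h2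
  omega

lemma X_mul_mem_hsub (n k : ℕ) (i : Fin (n + 1)) (f : PS n) (hf : f ∈ hsub n k) :
    X i * f ∈ hsub n (k + 1) := by
  have h : (X i * f : PS n).IsHomogeneous (1 + k) := (isHomogeneous_X ℂ i).mul hf
  rwa [add_comm 1 k] at h

lemma X_mul_mem_idealPiece (n k : ℕ) (J : Ideal (PS n)) (i : Fin (n + 1)) (f : PS n)
    (hf : f ∈ idealPiece n J k) : X i * f ∈ idealPiece n J (k + 1) :=
  ⟨J.mul_mem_left _ hf.1, X_mul_mem_hsub n k i f hf.2⟩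

/-- If `α_i T ⊆ A`, then the coefficient map to `ℂ^T` on `J_k` factors through multiplication by
`α_i` and the coefficient map to `ℂ^A` on `J_{k+1}`. -/
lemma rank_le_of_shift (n k : ℕ) (J : Ideal (PS n)) (i : Fin (n + 1))
    (T A : Finset (Fin (n + 1) →₀ ℕ)) (h : ∀ t ∈ T, Finsupp.single i 1 + t ∈ A) :
    Module.finrank ℂ ((idealPiece n J k).map (resT n T)) ≤
      Module.finrank ℂ ((idealPiece n J (k + 1)).map (resT n A)) := by
  let φ : (A → ℂ) →ₗ[ℂ] (T → ℂ) :=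
    LinearMap.funLeft ℂ ℂ fun t : T => (⟨Finsupp.single i 1 + (t : Fin (n + 1) →₀ ℕ), h t t.2⟩ : A)
  have hle : (idealPiece n J k).map (resT n T) ≤
      ((idealPiece n J (k + 1)).map (resT n A)).map φ := by
    rintro _ ⟨f, hf, rfl⟩
    refine ⟨_, ⟨X i * f, X_mul_mem_idealPiece n k J i f hf, rfl⟩, ?_⟩
    ext t
    exact coeff_X_mul (t : Fin (n + 1) →₀ ℕ) i f
  exact (Submodule.finrank_mono hle).trans (Submodule.finrank_map_le φ _)

/-! ### The graded pieces of `I` and their sum -/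

lemma Ipiece_mid (n : ℕ) (J : Ideal (PS n)) (M : ℕ → Finset (Fin (n + 1) →₀ ℕ)) (a b k : ℕ)
    (h1 : a ≤ k) (h2 : k ≤ b) :
    Ipiece n J M a b k = idealPiece n J k ⊓ LinearMap.ker (resT n (M k)) := by
  rw [← perp_sup_spanMon n k _ (idealPiece_le n k J)]
  simp [Ipiece, h1, h2, Wsp]

lemma Ipiece_high (n : ℕ) (J : Ideal (PS n)) (M : ℕ → Finset (Fin (n + 1) →₀ ℕ)) (a b k : ℕ)
    (h : b < k) : Ipiece n J M a b k = idealPiece n J k := by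
  simp [Ipiece, h]

lemma Ipiece_low (n : ℕ) (J : Ideal (PS n)) (M : ℕ → Finset (Fin (n + 1) →₀ ℕ)) (a b k : ℕ)
    (h1 : k < a) (h2 : k ≤ b) : Ipiece n J M a b k = ⊥ := by
  simp [Ipiece, h1, h2]

lemma Ipiece_le (n : ℕ) (J : Ideal (PS n)) (M : ℕ → Finset (Fin (n + 1) →₀ ℕ)) (a b k : ℕ) :
    Ipiece n J M a b k ≤ idealPiece n J k := by
  rcases lt_or_ge b k with h | h
  · exact (Ipiece_high n J M a b k h).le
  · rcases lt_or_ge k a with h' | h'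
    · rw [Ipiece_low n J M a b k h' h]; exact bot_le
    · rw [Ipiece_mid n J M a b k h' h]; exact inf_le_left

/-- A subspace of `S` stable under multiplication by the variables is an ideal. -/
lemma exists_ideal_of_X_mul (n : ℕ) (V : Submodule ℂ (PS n))
    (hV : ∀ i, ∀ p ∈ V, X i * p ∈ V) :
    ∃ II : Ideal (PS n), Submodule.restrictScalars ℂ II = V := by
  have key : ∀ q p : PS n, p ∈ V → q * p ∈ V := by
    intro q
    induction q using MvPolynomial.induction_on with
    | C c => intro p hp; rw [C_mul']; exact V.smul_mem c hp
    | add q q' hq hq' => intro p hp; rw [add_mul]; exact V.add_mem (hq p hp) (hq' p hp)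
    | mul_X q i hq => intro p hp; rw [mul_assoc]; exact hq _ (hV i p hp)
  exact ⟨{ carrier := V, add_mem' := V.add_mem, zero_mem' := V.zero_mem,
           smul_mem' := fun q p hp => key q p hp }, rfl⟩

/-- Homogeneous subspaces of pairwise different degrees do not interfere in their sum. -/
lemma iSup_inf_hsub (n : ℕ) (P : ℕ → Submodule ℂ (PS n)) (hP : ∀ k, P k ≤ hsub n k) (k : ℕ) :
    (⨆ k', P k') ⊓ hsub n k = P k := by
  refine le_antisymm ?_ (le_inf (le_iSup P k) (hP k))
  have hle : (⨆ k', P k') ≤ (P k).comap (homogeneousComponent k) := by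
    refine iSup_le fun k' f hf => ?_
    rw [Submodule.mem_comap, homogeneousComponent_of_mem (hP k' hf)]
    split_ifs with h
    · rwa [h]
    · exact zero_mem _
  rintro f ⟨hf, hk⟩
  have := hle hf
  rw [Submodule.mem_comap, homogeneousComponent_of_mem hk, if_pos rfl] at this
  exact this

/-! ### The ideal property -/

/-- Proposition 4.3(a),(c): the graded subspace `I` built from `J` by enlarging each graded piece
`J_k` (for `a ≤ k ≤ b`) by the largest monomials is a homogeneous ideal, which agrees with `J`
in all degrees `k ≥ b+1`. -/
theorem lifted_subspace_is_ideal (n r : ℕ) (hn : 1 ≤ n) (hr : 2 ≤ r)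
    (lo : LinearOrder (Fin (n + 1) →₀ ℕ))
    (hlo : ∀ u v w : Fin (n + 1) →₀ ℕ, lo.lt u v → lo.lt (u + w) (v + w))
    (J : Ideal (PS n)) (hJne : J ≠ ⊤) (hJhom : IsHomog n J)
    (hmono : ∀ k : ℕ, HF n J k ≤ HF n J (k + 1))
    (hstab : ∃ N : ℕ, ∀ k, N ≤ k → HF n J k = r)
    (a b : ℕ)
    (ha : r ≤ Module.finrank ℂ ↥(hsub n a) ∧
      ∀ a' < a, Module.finrank ℂ ↥(hsub n a') < r)
    (hb : HF n J b ≠ r ∧ ∀ k, b < k → HF n J k = r)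
    (M : ℕ → Finset (Fin (n + 1) →₀ ℕ))
    (hM : ∀ k, a ≤ k → k ≤ b →
      TopSeg n k lo (M k) ∧
      Module.finrank ℂ ↥(Wsp n J M k) = r ∧
      ∀ M' : Finset (Fin (n + 1) →₀ ℕ), TopSeg n k lo M' → M'.card < (M k).card →
        Module.finrank ℂ ↥(perp n k (idealPiece n J k) ⊔ spanMon n M') ≠ r) :
    (∃ II : Ideal (PS n),
        Submodule.restrictScalars ℂ II = ⨆ k : ℕ, Ipiece n J M a b k) ∧
      ∀ k : ℕ, b + 1 ≤ k →
        (⨆ k' : ℕ, Ipiece n J M a b k') ⊓ hsub n k = idealPiece n J k := by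
  classical
  refine ⟨exists_ideal_of_X_mul n _ ?_, fun k hk => ?_⟩
  · intro i p hp
    suffices h : (⨆ k : ℕ, Ipiece n J M a b k) ≤
        (⨆ k : ℕ, Ipiece n J M a b k).comap (LinearMap.mulLeft ℂ (X i : PS n)) from h hp
    refine iSup_le fun k f hf => ?_
    rw [Submodule.mem_comap, LinearMap.mulLeft_apply]
    refine Submodule.mem_iSup_of_mem (k + 1) ?_
    have hfJ := X_mul_mem_idealPiece n k J i f (Ipiece_le n J M a b k hf)
    rcases lt_or_ge b (k + 1) with hkb | hkb
    · rwa [Ipiece_high n J M a b _ hkb]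
    rcases lt_or_ge k a with hka | hka
    · rw [Ipiece_low n J M a b k hka (by omega), Submodule.mem_bot] at hf
      rw [hf, mul_zero]
      exact zero_mem _
    rw [Ipiece_mid n J M a b _ hka (by omega)] at hf
    rw [Ipiece_mid n J M a b _ (by omega) hkb]
    refine ⟨hfJ, ?_⟩
    obtain ⟨hfk, hfT⟩ := hf
    rw [SetLike.mem_coe, LinearMap.mem_ker] at hfT ⊢
    ext ⟨m, hm⟩
    rw [resT_apply]
    by_contra hne
    -- The offending monomial `m` of `α_i f` comes from a monomial `m'` of `f`.
    obtain ⟨m', hm', rfl⟩ : ∃ m', f.coeff m' ≠ 0 ∧ m = Finsupp.single i 1 + m' := by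
      change coeff m (X i * f) ≠ 0 at hne
      rw [coeff_X_mul'] at hne
      split_ifs at hne with hi
      · refine ⟨_, hne, ?_⟩
        refine (add_tsub_cancel_of_le ?_).symm
        rw [Finsupp.single_le_iff]
        exact Nat.one_le_iff_ne_zero.mpr (Finsupp.mem_support_iff.mp hi)
      · exact absurd rfl hne
    have hm'T : m' ∉ M k := fun h => hm' (congrFun hfT ⟨m', h⟩)
    have hm'k : ∑ j, m' j = k := (mem_hsub_iff n k f).mp hfk.2 m' hm'
    obtain ⟨⟨hT1, hT2⟩, hTr, -⟩ := hM k hka (by omega)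
    obtain ⟨⟨hS1, hS2⟩, hSr, hSmin⟩ := hM (k + 1) (by omega) hkb
    set m := Finsupp.single i 1 + m' with hm_def
    -- `A` is the part of `T_{k+1}` above `m`: a strictly shorter top segment, as it omits `m`.
    let A := (M (k + 1)).filter fun u => lo.lt m u
    have hAsub : A ⊆ M (k + 1) := Finset.filter_subset _ _
    have hA1 : ∀ u ∈ A, ∑ j, u j = k + 1 := fun u hu => hS1 u (hAsub hu)
    have hATop : TopSeg n (k + 1) lo A := by
      refine ⟨hA1, fun u hu v hv hvA => ?_⟩
      by_cases hvM : v ∈ M (k + 1)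
      · have h1 : ¬ lo.lt m v := fun h => hvA (Finset.mem_filter.mpr ⟨hvM, h⟩)
        exact @lt_of_le_of_lt _ lo.toPreorder _ _ _ ((@not_lt _ lo _ _).mp h1)
          (Finset.mem_filter.mp hu).2
      · exact hS2 u (hAsub hu) v hv hvM
    have hAcard : A.card < (M (k + 1)).card := by
      refine Finset.card_lt_card (Finset.ssubset_iff_subset_ne.mpr ⟨hAsub, fun h => ?_⟩)
      have : m ∈ A := h ▸ hm
      exact @lt_irrefl _ lo.toPreorder m (Finset.mem_filter.mp this).2
    have hshift : ∀ t ∈ M k, Finsupp.single i 1 + t ∈ A := by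
      intro t ht
      have hlt : lo.lt m (Finsupp.single i 1 + t) := by
        rw [hm_def, add_comm _ m', add_comm _ t]
        exact hlo _ _ _ (hT2 t ht m' hm'k hm'T)
      refine Finset.mem_filter.mpr ⟨?_, hlt⟩
      -- Otherwise `m ∈ T_{k+1}` would dominate `α_i t ∉ T_{k+1}`, although `m < α_i t`.
      by_contra hnot
      refine @lt_asymm _ lo.toPreorder _ _ hlt (hS2 m hm _ ?_ hnot)
      rw [← Finsupp.degree_eq_sum, map_add, Finsupp.degree_single, Finsupp.degree_eq_sum,
        hT1 t ht, add_comm]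
    -- Minimality only excludes dimension exactly `r`; the bound `≤ r` comes from `A ⊆ T_{k+1}`.
    have hdimA : Module.finrank ℂ
        ↥(perp n (k + 1) (idealPiece n J (k + 1)) ⊔ spanMon n A) < r := by
      refine lt_of_le_of_ne ?_ (hSmin A hATop hAcard)
      rw [← hSr]
      have := hsub_finite n (k + 1)
      have : Module.Finite ℂ (Wsp n J M (k + 1)) := Submodule.finiteDimensional_of_le
        (sup_le (perp_le n (k + 1) _) (spanMon_le_hsub n (k + 1) _ hS1))
      refine Submodule.finrank_mono (sup_le_sup_left (Submodule.span_mono ?_) _)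
      rintro _ ⟨u, hu, rfl⟩
      exact ⟨u, hAsub hu, rfl⟩
    rw [Wsp, finrank_perp_sup_spanMon n k J _ hT1] at hTr
    rw [finrank_perp_sup_spanMon n (k + 1) J A hA1] at hdimA
    have hrank := rank_le_of_shift n k J i (M k) A hshift
    have hmonok := hmono k
    omega
  · rw [iSup_inf_hsub n _ (fun k => (Ipiece_le n J M a b k).trans (idealPiece_le n k J)),
      Ipiece_high n J M a b k hk]
end
end

section
/- With notation as in the context, given a homogeneous ideal I_X ⊆ S_X with H_{S_X/I_X} = h_{r,X}, the graded subspace (ideal) J ⊆ S_{X×Y} defined by J_{(D,E)} = ℒ(E,1)·(S_X)_D + (S_Y)_E·(I_X)_D if (D,E) ∈ 𝒜, J_{(D,E)} = ℒ((D,E),r) if (D,E) ∈ ℬ, and J_{(D,E)} = 0 if (D,E) ∈ 𝒞, satisfies: dim_ℂ (S_{X×Y})_{(D,E)}/J_{(D,E)} = h_{r,X×Y}(D,E) for all (D,E) ∈ ℕ^d×ℕ^e, and J_{(D,0)} = (I_X)_D for every D ∈ ℕ^d. -/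
/-!
The dimension count is done separately on the three kinds of degrees.

* `(D,E) ∈ 𝒜`. Let `β^b` be the smallest monomial of degree `E`. The degree-`(D,E)` piece of
  `S_{X×Y}` is the direct sum of `ℒ(E,1)·(S_X)_D` and `β^b·(S_X)_D`. As `(I_X)_D ⊆ (S_X)_D`, the
  part of `(S_Y)_E·(I_X)_D` coming from monomials other than `β^b` already lies in
  `ℒ(E,1)·(S_X)_D`, so `J_{(D,E)}` is the direct sum of `ℒ(E,1)·(S_X)_D` and `β^b·(I_X)_D`. The
  codimension is therefore that of `(I_X)_D` in `(S_X)_D`, namely `r` (`finrank_caseA`).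
* `(D,E) ∈ ℬ`. In a finite linearly ordered set of size `N`, exactly `min N r` elements have fewer
  than `r` predecessors, so `ℒ((D,E),r)` misses exactly `r` monomials (`finrank_caseB`).
* `(D,E) ∈ 𝒞`. Here `J_{(D,E)} = 0`.

For the degrees `(D,0)`: if `dim (S_X)_D ≥ r`, then `1` is the only monomial of degree `0` in the
`β`-variables, so `ℒ(0,1) = 0`, `(S_Y)_0 = ℂ` and `J_{(D,0)} = (I_X)_D`. Otherwise
`dim (S_{X×Y})_{(D,0)} = dim (S_X)_D < r`, so `J_{(D,0)} = 0`, and the Hilbert function of `I_X`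
forces `(I_X)_D = 0` too.

All these subspaces except those built from `I_X` are spanned by monomials, so they are handled as
`restrictSupport` of sets of exponent vectors.
-/

open MvPolynomial

noncomputable section

/-- The variables of the Cox ring of a product of projective spaces. -/
abbrev PPVars (d : ℕ) (n : Fin d → ℕ) : Type := Σ i : Fin d, Fin (n i + 1)

/-- The ℤ^d-grading on the Cox ring of `X = ℙ^{n_1}×⋯×ℙ^{n_d}`: `deg α_{ij} = e_i`. -/
def wPP (d : ℕ) (n : Fin d → ℕ) : PPVars d n → (Fin d → ℕ) := fun p => Pi.single p.1 1

/-- The Cox ring of `X × Y`: polynomials in the `α`-variables (left) and `β`-variables (right). -/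
abbrev CoxXY (d e : ℕ) (n : Fin d → ℕ) (m : Fin e → ℕ) : Type :=
  MvPolynomial (PPVars d n ⊕ PPVars e m) ℂ

/-- The ℤ^{d+e}-grading on the Cox ring of `X × Y`. -/
def wXY (d e : ℕ) (n : Fin d → ℕ) (m : Fin e → ℕ) :
    PPVars d n ⊕ PPVars e m → (Fin d → ℕ) × (Fin e → ℕ) :=
  Sum.elim (fun p => (Pi.single p.1 1, 0)) (fun q => (0, Pi.single q.1 1))

/-- The degree-`D` component of the Cox ring of `X`. -/
def coxPieceX (d : ℕ) (n : Fin d → ℕ) (D : Fin d → ℕ) :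
    Submodule ℂ (MvPolynomial (PPVars d n) ℂ) :=
  weightedHomogeneousSubmodule ℂ (wPP d n) D

/-- The degree-`(D,E)` component of the Cox ring of `X × Y`. -/
def coxPieceXY (d e : ℕ) (n : Fin d → ℕ) (m : Fin e → ℕ)
    (u : (Fin d → ℕ) × (Fin e → ℕ)) : Submodule ℂ (CoxXY d e n m) :=
  weightedHomogeneousSubmodule ℂ (wXY d e n m) u

/-- A homogeneous ideal of the Cox ring of `X`. -/
def IsHomogX (d : ℕ) (n : Fin d → ℕ) (I : Ideal (MvPolynomial (PPVars d n) ℂ)) : Prop :=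
  Submodule.restrictScalars ℂ I =
    ⨆ D : Fin d → ℕ, (Submodule.restrictScalars ℂ I ⊓ coxPieceX d n D)

/-- A homogeneous ideal of the Cox ring of `X × Y`. -/
def IsHomogXY (d e : ℕ) (n : Fin d → ℕ) (m : Fin e → ℕ) (K : Ideal (CoxXY d e n m)) : Prop :=
  Submodule.restrictScalars ℂ K =
    ⨆ u : (Fin d → ℕ) × (Fin e → ℕ), (Submodule.restrictScalars ℂ K ⊓ coxPieceXY d e n m u)

/-- The Hilbert function of `S_X/I`. -/
def HFX (d : ℕ) (n : Fin d → ℕ) (I : Ideal (MvPolynomial (PPVars d n) ℂ))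
    (D : Fin d → ℕ) : ℕ :=
  Module.finrank ℂ ↥(coxPieceX d n D) -
    Module.finrank ℂ ↥(Submodule.restrictScalars ℂ I ⊓ coxPieceX d n D)

/-- The Hilbert function of `S_{X×Y}/K`. -/
def HFXY (d e : ℕ) (n : Fin d → ℕ) (m : Fin e → ℕ) (K : Ideal (CoxXY d e n m))
    (u : (Fin d → ℕ) × (Fin e → ℕ)) : ℕ :=
  Module.finrank ℂ ↥(coxPieceXY d e n m u) -
    Module.finrank ℂ ↥(Submodule.restrictScalars ℂ K ⊓ coxPieceXY d e n m u)

/-- The `X`-part of an exponent vector of the Cox ring of `X × Y`. -/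
def xPart {A B : Type*} (v : A ⊕ B →₀ ℕ) : A →₀ ℕ :=
  (Finsupp.sumFinsuppEquivProdFinsupp v).1

/-- The `Y`-part of an exponent vector of the Cox ring of `X × Y`. -/
def yPart {A B : Type*} (v : A ⊕ B →₀ ℕ) : B →₀ ℕ :=
  (Finsupp.sumFinsuppEquivProdFinsupp v).2

/-- The product monomial order on `S_{X×Y}`:
`α^u β^v > α^{u'} β^{v'}` iff `β^v > β^{v'}`, or `β^v = β^{v'}` and `α^u > α^{u'}`. -/
def prodLt {A B : Type*} (lX : LinearOrder (A →₀ ℕ)) (lY : LinearOrder (B →₀ ℕ))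
    (u v : A ⊕ B →₀ ℕ) : Prop :=
  lY.lt (yPart u) (yPart v) ∨ (yPart u = yPart v ∧ lX.lt (xPart u) (xPart v))

/-- The number of monomials of the same degree as `v` that are smaller than `v`. -/
def smallerCount (d e : ℕ) (n : Fin d → ℕ) (m : Fin e → ℕ)
    (lX : LinearOrder (PPVars d n →₀ ℕ)) (lY : LinearOrder (PPVars e m →₀ ℕ))
    (v : PPVars d n ⊕ PPVars e m →₀ ℕ) : ℕ :=
  Set.ncard {v' : PPVars d n ⊕ PPVars e m →₀ ℕ |
    Finsupp.weight (wXY d e n m) v' = Finsupp.weight (wXY d e n m) v ∧ prodLt lX lY v' v}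

/-- `ℒ(u,s)`: the span of all degree-`u` monomials of `S_{X×Y}` except the `s` smallest ones,
i.e. of those degree-`u` monomials having at least `s` smaller monomials of the same degree. -/
def LL (d e : ℕ) (n : Fin d → ℕ) (m : Fin e → ℕ)
    (lX : LinearOrder (PPVars d n →₀ ℕ)) (lY : LinearOrder (PPVars e m →₀ ℕ))
    (u : (Fin d → ℕ) × (Fin e → ℕ)) (s : ℕ) : Submodule ℂ (CoxXY d e n m) :=
  Submodule.span ℂ {p : CoxXY d e n m | ∃ v : PPVars d n ⊕ PPVars e m →₀ ℕ,
    Finsupp.weight (wXY d e n m) v = u ∧ s ≤ smallerCount d e n m lX lY v ∧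
    p = monomial v 1}

/-- The image in `S_{X×Y}` of the graded piece `(I_X)_D ⊆ S_X`. -/
def IXemb (d e : ℕ) (n : Fin d → ℕ) (m : Fin e → ℕ)
    (IX : Ideal (MvPolynomial (PPVars d n) ℂ)) (D : Fin d → ℕ) :
    Submodule ℂ (CoxXY d e n m) :=
  Submodule.map (MvPolynomial.rename
      (Sum.inl : PPVars d n → PPVars d n ⊕ PPVars e m)).toLinearMap
    (Submodule.restrictScalars ℂ IX ⊓ coxPieceX d n D)

/-- The degree-`(D,E)` piece of the graded subspace `J`:
`ℒ(E,1)·(S_X)_D + (S_Y)_E·(I_X)_D` if `(D,E) ∈ 𝒜` (i.e. `dim (S_X)_D ≥ r`),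
`ℒ((D,E),r)` if `(D,E) ∈ ℬ` (i.e. `dim (S_X)_D < r ≤ dim (S_{X×Y})_{(D,E)}`), and `0` if
`(D,E) ∈ 𝒞` (i.e. `dim (S_{X×Y})_{(D,E)} < r`). -/
def Jpiece (r d e : ℕ) (n : Fin d → ℕ) (m : Fin e → ℕ)
    (lX : LinearOrder (PPVars d n →₀ ℕ)) (lY : LinearOrder (PPVars e m →₀ ℕ))
    (IX : Ideal (MvPolynomial (PPVars d n) ℂ))
    (u : (Fin d → ℕ) × (Fin e → ℕ)) : Submodule ℂ (CoxXY d e n m) :=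
  if r ≤ Module.finrank ℂ ↥(coxPieceX d n u.1) then
    LL d e n m lX lY (0, u.2) 1 * coxPieceXY d e n m (u.1, 0) ⊔
      coxPieceXY d e n m (0, u.2) * IXemb d e n m IX u.1
  else if r ≤ Module.finrank ℂ ↥(coxPieceXY d e n m u) then LL d e n m lX lY u r
  else ⊥

/-! ### Exponent vectors and their degrees -/

theorem weight_wXY {d e : ℕ} {n : Fin d → ℕ} {m : Fin e → ℕ}
    (v : PPVars d n ⊕ PPVars e m →₀ ℕ) :
    Finsupp.weight (wXY d e n m) v =
      (Finsupp.weight (wPP d n) (xPart v), Finsupp.weight (wPP e m) (yPart v)) := by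
  simp only [Finsupp.weight_apply]
  rw [Finsupp.sum_fintype _ _ (by simp), Finsupp.sum_fintype _ _ (by simp),
    Finsupp.sum_fintype _ _ (by simp), Fintype.sum_sum_type]
  apply Prod.ext <;> simp [wXY, wPP, xPart, yPart, Prod.fst_sum, Prod.snd_sum]

theorem part_ext {A B : Type*} {u v : A ⊕ B →₀ ℕ} (hx : xPart u = xPart v)
    (hy : yPart u = yPart v) : u = v :=
  Finsupp.sumFinsuppEquivProdFinsupp.injective (Prod.ext hx hy)

theorem xPart_add {A B : Type*} (u v : A ⊕ B →₀ ℕ) : xPart (u + v) = xPart u + xPart v := by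
  ext; simp [xPart]

theorem yPart_add {A B : Type*} (u v : A ⊕ B →₀ ℕ) : yPart (u + v) = yPart u + yPart v := by
  ext; simp [yPart]

theorem exists_part {A B : Type*} (a : A →₀ ℕ) (b : B →₀ ℕ) :
    ∃ v : A ⊕ B →₀ ℕ, xPart v = a ∧ yPart v = b :=
  ⟨Finsupp.sumFinsuppEquivProdFinsupp.symm (a, b), by simp [xPart], by simp [yPart]⟩

theorem le_of_weight_wPP {d : ℕ} {n : Fin d → ℕ} (v : PPVars d n →₀ ℕ) (p : PPVars d n) :
    v p ≤ Finsupp.weight (wPP d n) v p.1 := by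
  rw [Finsupp.weight_apply, Finsupp.sum_fintype _ _ (by simp), Finset.sum_apply]
  refine le_trans ?_ (Finset.single_le_sum (f := fun q => (v q • wPP d n q) p.1)
    (fun _ _ => Nat.zero_le _) (Finset.mem_univ p))
  simp [wPP]

theorem eq_zero_of_weight_wPP {d : ℕ} {n : Fin d → ℕ} {v : PPVars d n →₀ ℕ}
    (h : Finsupp.weight (wPP d n) v = 0) : v = 0 := by
  ext p
  simpa [h] using le_of_weight_wPP v p

theorem finite_weight_wPP {d : ℕ} {n : Fin d → ℕ} (D : Fin d → ℕ) :
    {v : PPVars d n →₀ ℕ | Finsupp.weight (wPP d n) v = D}.Finite := by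
  refine (Set.finite_Iic (Finsupp.equivFunOnFinite.symm fun p : PPVars d n => D p.1)).subset ?_
  rintro v rfl p
  exact le_of_weight_wPP v p

theorem finite_weight_wXY {d e : ℕ} {n : Fin d → ℕ} {m : Fin e → ℕ}
    (u : (Fin d → ℕ) × (Fin e → ℕ)) :
    {v : PPVars d n ⊕ PPVars e m →₀ ℕ | Finsupp.weight (wXY d e n m) v = u}.Finite := by
  refine (((finite_weight_wPP (n := n) u.1).prod (finite_weight_wPP (n := m) u.2)).preimage
    Finsupp.sumFinsuppEquivProdFinsupp.injective.injOn).subset ?_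
  rintro v rfl
  rw [weight_wXY]
  exact ⟨rfl, rfl⟩

theorem exists_weight_wPP {d : ℕ} {n : Fin d → ℕ} (D : Fin d → ℕ) :
    ∃ v : PPVars d n →₀ ℕ, Finsupp.weight (wPP d n) v = D := by
  refine ⟨∑ i, Finsupp.single ⟨i, 0⟩ (D i), ?_⟩
  rw [map_sum]
  ext j
  simp [Finsupp.weight_single, wPP, Finset.sum_apply, Pi.single_apply]

/-! ### Counting the smallest monomials -/

/-- In a finite subset `S` of a linear order, `min #S r` elements have fewer than `r` predecessors
in `S`: the number of predecessors is a bijection from `S` onto `{0, …, #S - 1}`. -/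
theorem card_filter_rank_lt {α : Type*} [LinearOrder α] (S : Finset α) (r : ℕ) :
    (S.filter fun x => (S.filter (· < x)).card < r).card = min S.card r := by
  set f : α → ℕ := fun x => (S.filter (· < x)).card with hf
  have hmono : StrictMonoOn f S := by
    intro x hx y hy hxy
    refine Finset.card_lt_card (Finset.ssubset_iff_of_subset ?_ |>.2 ⟨x, ?_, ?_⟩)
    · intro z hz
      simp only [Finset.mem_filter] at hz ⊢
      exact ⟨hz.1, hz.2.trans hxy⟩
    · simpa [hxy] using hx
    · simp
  have himg : S.image f = Finset.range S.card := by
    refine Finset.eq_of_subset_of_card_le ?_ ?_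
    · intro k hk
      obtain ⟨x, hx, rfl⟩ := Finset.mem_image.1 hk
      refine Finset.mem_range.2 (Finset.card_lt_card ?_)
      exact Finset.filter_ssubset.2 ⟨x, hx, lt_irrefl x⟩
    · rw [Finset.card_image_of_injOn hmono.injOn, Finset.card_range]
  have hinj : Set.InjOn f (S.filter fun x => f x < r) :=
    hmono.injOn.mono (by intro x hx; exact (Finset.mem_filter.1 hx).1)
  rw [← Finset.card_image_of_injOn hinj, ← Finset.filter_image (p := (· < r)), himg]
  have : (Finset.range S.card).filter (· < r) = Finset.range (min S.card r) := by
    ext; simp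
  rw [this, Finset.card_range]

/-- `card_filter_rank_lt` for the monomials of degree `u`: the product order is the lexicographic
order on pairs (`Y`-part, `X`-part), hence linear. -/
theorem ncard_smallerCount_lt {d e : ℕ} {n : Fin d → ℕ} {m : Fin e → ℕ}
    (lX : LinearOrder (PPVars d n →₀ ℕ)) (lY : LinearOrder (PPVars e m →₀ ℕ))
    (u : (Fin d → ℕ) × (Fin e → ℕ)) (r : ℕ) :
    {v : PPVars d n ⊕ PPVars e m →₀ ℕ |
      Finsupp.weight (wXY d e n m) v = u ∧ smallerCount d e n m lX lY v < r}.ncard =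
      min {v : PPVars d n ⊕ PPVars e m →₀ ℕ | Finsupp.weight (wXY d e n m) v = u}.ncard r := by
  let L : LinearOrder ((PPVars e m →₀ ℕ) ×ₗ (PPVars d n →₀ ℕ)) :=
    @Prod.Lex.instLinearOrder _ _ lY lX
  let L' : LinearOrder (PPVars d n ⊕ PPVars e m →₀ ℕ) :=
    @LinearOrder.lift' _ _ L (fun v => toLex (yPart v, xPart v)) (fun v w h => by
      have h' := Prod.ext_iff.1 (toLex.injective h)
      exact part_ext h'.2 h'.1)
  have hlt : ∀ v w : PPVars d n ⊕ PPVars e m →₀ ℕ, L'.lt v w ↔ prodLt lX lY v w := by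
    intro v w
    exact @Prod.Lex.toLex_lt_toLex _ _ lY.toLT lX.toLT (yPart v, xPart v) (yPart w, xPart w)
  have hfin := finite_weight_wXY (n := n) (m := m) u
  set S := hfin.toFinset with hS
  have key := @card_filter_rank_lt _ L' S r
  rw [Set.ncard_eq_toFinset_card _ hfin, ← hS, ← key, ← Set.ncard_coe_finset]
  congr 1
  ext v
  simp only [Set.mem_ofPred_eq, Finset.coe_filter, hS, Set.Finite.mem_toFinset]
  refine and_congr_right fun hv => ?_
  rw [smallerCount, ← Set.ncard_coe_finset]
  have : {v' | Finsupp.weight (wXY d e n m) v' = Finsupp.weight (wXY d e n m) v ∧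
      prodLt lX lY v' v} = (↑(@Finset.filter _ (fun x => L'.lt x v)
        (fun x => L'.toDecidableLT x v) S) : Set _) := by
    ext w
    simp [hS, hv, hlt]
  rw [this]

/-! ### Spans of monomials -/

theorem coxPieceX_eq (d : ℕ) (n : Fin d → ℕ) (D : Fin d → ℕ) :
    coxPieceX d n D = restrictSupport ℂ {v | Finsupp.weight (wPP d n) v = D} :=
  weightedHomogeneousSubmodule_eq_finsupp_supported ℂ _ _

theorem coxPieceXY_eq (d e : ℕ) (n : Fin d → ℕ) (m : Fin e → ℕ)
    (u : (Fin d → ℕ) × (Fin e → ℕ)) :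
    coxPieceXY d e n m u = restrictSupport ℂ {v | Finsupp.weight (wXY d e n m) v = u} :=
  weightedHomogeneousSubmodule_eq_finsupp_supported ℂ _ _

theorem LL_eq (d e : ℕ) (n : Fin d → ℕ) (m : Fin e → ℕ)
    (lX : LinearOrder (PPVars d n →₀ ℕ)) (lY : LinearOrder (PPVars e m →₀ ℕ))
    (u : (Fin d → ℕ) × (Fin e → ℕ)) (s : ℕ) :
    LL d e n m lX lY u s = restrictSupport ℂ
      {v | Finsupp.weight (wXY d e n m) v = u ∧ s ≤ smallerCount d e n m lX lY v} := by
  rw [restrictSupport_eq_span, LL]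
  congr 1
  ext p
  simp only [Set.mem_ofPred_eq, Set.mem_image, and_assoc, eq_comm]

theorem finrank_restrictSupport {σ : Type*} (s : Set (σ →₀ ℕ)) :
    Module.finrank ℂ ↥(restrictSupport ℂ s) = s.ncard :=
  Module.finrank_eq_nat_card_basis (basisRestrictSupport ℂ s)

theorem finite_restrictSupport {σ : Type*} {s : Set (σ →₀ ℕ)} (hs : s.Finite) :
    FiniteDimensional ℂ ↥(restrictSupport ℂ s) :=
  have := hs.to_subtype
  Module.Finite.of_basis (basisRestrictSupport ℂ s)

theorem restrictSupport_union {σ : Type*} (s t : Set (σ →₀ ℕ)) :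
    restrictSupport ℂ (s ∪ t) = restrictSupport ℂ s ⊔ restrictSupport ℂ t := by
  simp only [restrictSupport_eq_span, Set.image_union, Submodule.span_union]

theorem disjoint_restrictSupport {σ : Type*} {s t : Set (σ →₀ ℕ)} (h : Disjoint s t) :
    Disjoint (restrictSupport ℂ s) (restrictSupport ℂ t) := by
  rw [Submodule.disjoint_def]
  intro p hs ht
  rw [mem_restrictSupport_iff] at hs ht
  have := Set.disjoint_left.1 h
  rw [← support_eq_empty, Finset.eq_empty_iff_forall_notMem]
  exact fun v hv => this (hs hv) (ht hv)

theorem finrank_sup_of_disjoint {V : Type*} [AddCommGroup V] [Module ℂ V] {P Q : Submodule ℂ V}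
    [FiniteDimensional ℂ P] [FiniteDimensional ℂ Q] (h : Disjoint P Q) :
    Module.finrank ℂ ↥(P ⊔ Q) = Module.finrank ℂ P + Module.finrank ℂ Q := by
  rw [← Submodule.finrank_sup_add_finrank_inf_eq, h.eq_bot, finrank_bot, add_zero]

/-- Multiplication by a monomial preserves dimensions, as it is injective. -/
theorem finrank_monomial_mul {σ : Type*} (v : σ →₀ ℕ) (P : Submodule ℂ (MvPolynomial σ ℂ)) :
    Module.finrank ℂ ↥(restrictSupport ℂ {v} * P) = Module.finrank ℂ P := by
  have : restrictSupport ℂ {v} * P =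
      P.map (LinearMap.mulLeft ℂ (monomial v (1 : ℂ))) := by
    rw [restrictSupport_eq_span, Set.image_singleton]
    ext p
    simp [Submodule.mem_span_singleton_mul]
  rw [this]
  refine (Submodule.equivMapOfInjective _ ?_ P).symm.finrank_eq
  exact mul_right_injective₀ (by simp)

/-! ### The pieces of degree `(D,0)` and the image of `(I_X)_D` -/

theorem map_rename_coxPieceX (d e : ℕ) (n : Fin d → ℕ) (m : Fin e → ℕ) (D : Fin d → ℕ) :
    Submodule.map (MvPolynomial.rename
      (Sum.inl : PPVars d n → PPVars d n ⊕ PPVars e m)).toLinearMap (coxPieceX d n D) =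
      coxPieceXY d e n m (D, 0) := by
  rw [coxPieceX_eq, coxPieceXY_eq, restrictSupport_eq_span, restrictSupport_eq_span,
    Submodule.map_span, Set.image_image]
  congr 1
  have hx : ∀ a : PPVars d n →₀ ℕ,
      xPart (Finsupp.mapDomain (Sum.inl : _ → PPVars d n ⊕ PPVars e m) a) = a := fun a => by
    ext p
    simp [xPart, Finsupp.mapDomain_apply Sum.inl_injective]
  have hy : ∀ a : PPVars d n →₀ ℕ,
      yPart (Finsupp.mapDomain (Sum.inl : _ → PPVars d n ⊕ PPVars e m) a) = 0 := fun a => by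
    ext p
    simp [yPart, Finsupp.mapDomain_of_notMem_range]
  ext p
  simp only [Set.mem_image, Set.mem_ofPred_eq, AlgHom.toLinearMap_apply, rename_monomial]
  constructor
  · rintro ⟨a, ha, rfl⟩
    exact ⟨_, by simp [weight_wXY, hx, hy, ha], rfl⟩
  · rintro ⟨v, hv, rfl⟩
    rw [weight_wXY, Prod.mk.injEq] at hv
    refine ⟨xPart v, hv.1, ?_⟩
    refine congrArg (fun w => monomial w (1 : ℂ)) ?_
    exact part_ext (hx _) (by rw [hy, eq_zero_of_weight_wPP hv.2])

theorem rename_inl_injective {A B : Type*} : Function.Injective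
    (MvPolynomial.rename (R := ℂ) (Sum.inl : A → A ⊕ B)).toLinearMap :=
  rename_injective _ Sum.inl_injective

theorem IXemb_le {d e : ℕ} {n : Fin d → ℕ} {m : Fin e → ℕ}
    (IX : Ideal (MvPolynomial (PPVars d n) ℂ)) (D : Fin d → ℕ) :
    IXemb d e n m IX D ≤ coxPieceXY d e n m (D, 0) := by
  rw [← map_rename_coxPieceX]
  exact Submodule.map_mono inf_le_right

theorem finrank_IXemb {d e : ℕ} {n : Fin d → ℕ} {m : Fin e → ℕ}
    (IX : Ideal (MvPolynomial (PPVars d n) ℂ)) (D : Fin d → ℕ) :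
    Module.finrank ℂ ↥(IXemb d e n m IX D) =
      Module.finrank ℂ ↥(Submodule.restrictScalars ℂ IX ⊓ coxPieceX d n D) :=
  (Submodule.equivMapOfInjective _ rename_inl_injective _).symm.finrank_eq

theorem finrank_coxPieceXY_zero (d e : ℕ) (n : Fin d → ℕ) (m : Fin e → ℕ) (D : Fin d → ℕ) :
    Module.finrank ℂ ↥(coxPieceXY d e n m (D, 0)) = Module.finrank ℂ ↥(coxPieceX d n D) := by
  rw [← map_rename_coxPieceX]
  exact (Submodule.equivMapOfInjective _ rename_inl_injective _).symm.finrank_eq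

theorem finite_coxPieceX (d : ℕ) (n : Fin d → ℕ) (D : Fin d → ℕ) :
    FiniteDimensional ℂ ↥(coxPieceX d n D) := by
  rw [coxPieceX_eq]
  exact finite_restrictSupport (finite_weight_wPP D)

theorem finite_coxPieceXY (d e : ℕ) (n : Fin d → ℕ) (m : Fin e → ℕ)
    (u : (Fin d → ℕ) × (Fin e → ℕ)) :
    FiniteDimensional ℂ ↥(coxPieceXY d e n m u) := by
  rw [coxPieceXY_eq]
  exact finite_restrictSupport (finite_weight_wXY u)

/-! ### Codimension of the pieces of `J` -/

theorem coxPieceXY_mul (d e : ℕ) (n : Fin d → ℕ) (m : Fin e → ℕ)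
    (D : Fin d → ℕ) (E : Fin e → ℕ) :
    coxPieceXY d e n m (D, E) = coxPieceXY d e n m (0, E) * coxPieceXY d e n m (D, 0) := by
  simp only [coxPieceXY_eq]
  rw [← restrictSupport_add]
  congr 1
  ext v
  simp only [Set.mem_ofPred_eq, Set.mem_add]
  constructor
  · intro hv
    rw [weight_wXY, Prod.mk.injEq] at hv
    obtain ⟨b, hbx, hby⟩ := exists_part (0 : PPVars d n →₀ ℕ) (yPart v)
    obtain ⟨a, hax, hay⟩ := exists_part (xPart v) (0 : PPVars e m →₀ ℕ)
    refine ⟨b, ?_, a, ?_, part_ext ?_ ?_⟩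
    · simp [weight_wXY, hbx, hby, hv.2]
    · simp [weight_wXY, hax, hay, hv.1]
    · simp [xPart_add, hbx, hax]
    · simp [yPart_add, hby, hay]
  · rintro ⟨b, hb, a, ha, rfl⟩
    simp [map_add, hb, ha]

/-- The degree-`(0,E)` monomials split into the smallest one, `v`, and the monomials spanning
`ℒ(E,1)`. -/
theorem exists_min_monomial {d e : ℕ} {n : Fin d → ℕ} {m : Fin e → ℕ}
    (lX : LinearOrder (PPVars d n →₀ ℕ)) (lY : LinearOrder (PPVars e m →₀ ℕ))
    (E : Fin e → ℕ) :
    ∃ v : PPVars d n ⊕ PPVars e m →₀ ℕ, ∃ T : Set (PPVars d n ⊕ PPVars e m →₀ ℕ),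
      v ∉ T ∧ T ∪ {v} = {w | Finsupp.weight (wXY d e n m) w = (0, E)} ∧
      LL d e n m lX lY (0, E) 1 = restrictSupport ℂ T := by
  have hcard := ncard_smallerCount_lt lX lY ((0 : Fin d → ℕ), E) 1
  have hne : {v : PPVars d n ⊕ PPVars e m →₀ ℕ | Finsupp.weight (wXY d e n m) v = (0, E)}.Nonempty := by
    obtain ⟨b, hb⟩ := exists_weight_wPP (n := m) E
    obtain ⟨v, hvx, hvy⟩ := exists_part (0 : PPVars d n →₀ ℕ) b
    exact ⟨v, by simp [weight_wXY, hvx, hvy, hb]⟩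
  have hpos := (Set.ncard_pos (finite_weight_wXY _)).2 hne
  rw [min_eq_right hpos, Set.ncard_eq_one] at hcard
  obtain ⟨v, hv⟩ := hcard
  have hmem := fun w => Set.ext_iff.1 hv w
  simp only [Set.mem_ofPred_eq, Set.mem_singleton_iff] at hmem
  refine ⟨v, _, ?_, ?_, LL_eq ..⟩
  · intro h
    exact absurd ((hmem v).2 rfl).2 (not_lt.2 h.2)
  · ext w
    have := hmem w
    simp only [Set.mem_union, Set.mem_ofPred_eq, Set.mem_singleton_iff, ← this]
    rw [← and_or_left, and_iff_left (le_or_gt _ _)]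

/-- The subspace `ℒ(E,1)·(S_X)_D + (S_Y)_E·(I_X)_D`, in any degree `(D,E)`, has the codimension of
`(I_X)_D` in `(S_X)_D`: with `β^b` the smallest monomial of degree `E`, the piece of `S_{X×Y}` is
`ℒ(E,1)·(S_X)_D ⊕ β^b·(S_X)_D`, whereas the subspace is `ℒ(E,1)·(S_X)_D ⊕ β^b·(I_X)_D`. Here `q` is
the dimension of the common summand. -/
theorem finrank_caseA {d e : ℕ} {n : Fin d → ℕ} {m : Fin e → ℕ}
    (lX : LinearOrder (PPVars d n →₀ ℕ)) (lY : LinearOrder (PPVars e m →₀ ℕ))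
    (IX : Ideal (MvPolynomial (PPVars d n) ℂ)) (D : Fin d → ℕ) (E : Fin e → ℕ) :
    ∃ q, Module.finrank ℂ ↥(coxPieceXY d e n m (D, E)) = q + Module.finrank ℂ ↥(coxPieceX d n D) ∧
      Module.finrank ℂ ↥(LL d e n m lX lY (0, E) 1 * coxPieceXY d e n m (D, 0) ⊔
        coxPieceXY d e n m (0, E) * IXemb d e n m IX D) =
      q + Module.finrank ℂ ↥(Submodule.restrictScalars ℂ IX ⊓ coxPieceX d n D) := by
  obtain ⟨v, T, hvT, hT, hL⟩ := exists_min_monomial (n := n) (m := m) lX lY E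
  have hpE : coxPieceXY d e n m (0, E) = restrictSupport ℂ T ⊔ restrictSupport ℂ {v} := by
    rw [coxPieceXY_eq, ← hT, restrictSupport_union]
  rw [hL]
  set P := coxPieceXY d e n m (D, 0) with hP
  set I := IXemb d e n m IX D with hI
  have hIP : I ≤ P := IXemb_le IX D
  have hpiece : coxPieceXY d e n m (D, E) =
      restrictSupport ℂ T * P ⊔ restrictSupport ℂ {v} * P := by
    rw [coxPieceXY_mul, hpE, Submodule.sup_mul]
  have hJ : restrictSupport ℂ T * P ⊔ coxPieceXY d e n m (0, E) * I =
      restrictSupport ℂ T * P ⊔ restrictSupport ℂ {v} * I := by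
    rw [hpE, Submodule.sup_mul, ← sup_assoc, sup_eq_left.2 (mul_le_mul_right hIP _)]
  have hx0 : ∀ w ∈ T ∪ {v}, xPart w = 0 := by
    intro w hw
    rw [hT, Set.mem_ofPred_eq, weight_wXY, Prod.mk.injEq] at hw
    exact eq_zero_of_weight_wPP hw.1
  have hdisj : Disjoint (restrictSupport ℂ T * P) (restrictSupport ℂ {v} * P) := by
    rw [hP, coxPieceXY_eq, ← restrictSupport_add, ← restrictSupport_add]
    refine disjoint_restrictSupport (Set.disjoint_left.2 ?_)
    rintro _ ⟨t, ht, a, ha, rfl⟩ ⟨v', rfl, a', ha', h⟩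
    have ha0 : ∀ a ∈ {w | Finsupp.weight (wXY d e n m) w = (D, 0)}, yPart a = 0 := by
      intro a ha
      rw [Set.mem_ofPred_eq, weight_wXY, Prod.mk.injEq] at ha
      exact eq_zero_of_weight_wPP ha.2
    have hy := congrArg yPart h
    simp only [yPart_add, ha0 a ha, ha0 a' ha', add_zero] at hy
    have : t = v' := part_ext ((hx0 t (Or.inl ht)).trans (hx0 v' (Or.inr rfl)).symm) hy.symm
    exact hvT (this ▸ ht)
  have := finite_coxPieceXY d e n m (D, E)
  have f1 : FiniteDimensional ℂ ↥(restrictSupport ℂ T * P) :=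
    Submodule.finiteDimensional_of_le (hpiece ▸ le_sup_left)
  have f2 : FiniteDimensional ℂ ↥(restrictSupport ℂ {v} * P) :=
    Submodule.finiteDimensional_of_le (hpiece ▸ le_sup_right)
  have hle : restrictSupport ℂ {v} * I ≤ restrictSupport ℂ {v} * P := mul_le_mul_right hIP _
  have f3 : FiniteDimensional ℂ ↥(restrictSupport ℂ {v} * I) :=
    Submodule.finiteDimensional_of_le hle
  refine ⟨Module.finrank ℂ ↥(restrictSupport ℂ T * P), ?_, ?_⟩
  · rw [hpiece, finrank_sup_of_disjoint hdisj, finrank_monomial_mul, hP, finrank_coxPieceXY_zero]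
  · rw [hJ, finrank_sup_of_disjoint (hdisj.mono_right hle), finrank_monomial_mul, hI, finrank_IXemb]

/-- The codimension of `ℒ(u,r)` is `r`, or the whole dimension if there are fewer than `r`
monomials of degree `u`. -/
theorem finrank_caseB {d e : ℕ} {n : Fin d → ℕ} {m : Fin e → ℕ}
    (lX : LinearOrder (PPVars d n →₀ ℕ)) (lY : LinearOrder (PPVars e m →₀ ℕ))
    (u : (Fin d → ℕ) × (Fin e → ℕ)) (r : ℕ) :
    Module.finrank ℂ ↥(coxPieceXY d e n m u) = Module.finrank ℂ ↥(LL d e n m lX lY u r) +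
      min (Module.finrank ℂ ↥(coxPieceXY d e n m u)) r := by
  have hfin := finite_weight_wXY (n := n) (m := m) u
  rw [LL_eq, coxPieceXY_eq, finrank_restrictSupport, finrank_restrictSupport,
    ← ncard_smallerCount_lt lX lY, ← Set.ncard_union_eq ?_ (hfin.subset fun v h => h.1)
      (hfin.subset fun v h => h.1)]
  · congr 1
    ext v
    simp only [Set.mem_ofPred_eq, Set.mem_union, ← and_or_left]
    simp [le_or_gt]
  · exact Set.disjoint_left.2 fun v h h' => absurd h'.2 (not_lt.2 h.2)

theorem coxPieceXY_zero_zero (d e : ℕ) (n : Fin d → ℕ) (m : Fin e → ℕ) :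
    coxPieceXY d e n m (0, 0) = 1 := by
  rw [coxPieceXY_eq, ← restrictSupport_zero]
  congr 1
  ext v
  constructor
  · intro h
    rw [Set.mem_ofPred_eq, weight_wXY, Prod.mk.injEq] at h
    exact part_ext (by simpa [xPart] using eq_zero_of_weight_wPP h.1)
      (by simpa [yPart] using eq_zero_of_weight_wPP h.2)
  · rintro rfl
    exact map_zero _

theorem LL_zero_zero {d e : ℕ} {n : Fin d → ℕ} {m : Fin e → ℕ}
    (lX : LinearOrder (PPVars d n →₀ ℕ)) (lY : LinearOrder (PPVars e m →₀ ℕ)) :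
    LL d e n m lX lY (0, 0) 1 = ⊥ := by
  have h := finrank_caseB (n := n) (m := m) lX lY (0, 0) 1
  have h1 : Module.finrank ℂ ↥(coxPieceXY d e n m (0, 0)) = 1 := by
    rw [coxPieceXY_zero_zero, ← restrictSupport_zero, finrank_restrictSupport]
    exact Set.ncard_singleton 0
  have f : FiniteDimensional ℂ ↥(LL d e n m lX lY (0, 0) 1) := by
    rw [LL_eq]
    exact finite_restrictSupport ((finite_weight_wXY _).subset fun v h => h.1)
  refine Submodule.finrank_eq_zero.1 ?_
  omega

/-- Lemma 3.2 for products of projective spaces: the graded subspace `J` associated to a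
homogeneous ideal `I_X ⊆ S_X` with Hilbert function `h_{r,X}` has
`dim (S_{X×Y})_{(D,E)}/J_{(D,E)} = h_{r,X×Y}(D,E)` in every degree, and its pieces of degree
`(D,0)` coincide with `(I_X)_D`. -/
theorem graded_subspace_hilbert_function_and_restriction
    (r d e : ℕ) (hr : 1 ≤ r) (hd : 1 ≤ d) (he : 1 ≤ e)
    (n : Fin d → ℕ) (m : Fin e → ℕ) (hn : ∀ i, 1 ≤ n i) (hm : ∀ j, 1 ≤ m j)
    (lX : LinearOrder (PPVars d n →₀ ℕ))
    (hlX : ∀ u v w : PPVars d n →₀ ℕ, lX.lt u v → lX.lt (u + w) (v + w))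
    (lY : LinearOrder (PPVars e m →₀ ℕ))
    (hlY : ∀ u v w : PPVars e m →₀ ℕ, lY.lt u v → lY.lt (u + w) (v + w))
    (IX : Ideal (MvPolynomial (PPVars d n) ℂ))
    (hIXhom : IsHomogX d n IX)
    (hIXHF : ∀ D : Fin d → ℕ, HFX d n IX D = min (Module.finrank ℂ ↥(coxPieceX d n D)) r) :
    (∀ u : (Fin d → ℕ) × (Fin e → ℕ),
      Module.finrank ℂ ↥(coxPieceXY d e n m u) -
          Module.finrank ℂ ↥(Jpiece r d e n m lX lY IX u) =
        min (Module.finrank ℂ ↥(coxPieceXY d e n m u)) r) ∧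
    ∀ D : Fin d → ℕ, Jpiece r d e n m lX lY IX (D, 0) = IXemb d e n m IX D := by
  have hle : ∀ D, Module.finrank ℂ ↥(Submodule.restrictScalars ℂ IX ⊓ coxPieceX d n D) ≤
      Module.finrank ℂ ↥(coxPieceX d n D) := fun D =>
    have := finite_coxPieceX d n D
    Submodule.finrank_mono inf_le_right
  simp only [HFX] at hIXHF
  refine ⟨?_, fun D => ?_⟩
  · rintro ⟨D, E⟩
    by_cases hA : r ≤ Module.finrank ℂ ↥(coxPieceX d n D)
    · obtain ⟨q, h1, h2⟩ := finrank_caseA (m := m) lX lY IX D E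
      have hJ : Jpiece r d e n m lX lY IX (D, E) =
        LL d e n m lX lY (0, E) 1 * coxPieceXY d e n m (D, 0) ⊔
          coxPieceXY d e n m (0, E) * IXemb d e n m IX D := if_pos hA
      have h3 := hIXHF D
      have h4 := hle D
      rw [hJ, h2]
      omega
    by_cases hB : r ≤ Module.finrank ℂ ↥(coxPieceXY d e n m (D, E))
    · have hJ : Jpiece r d e n m lX lY IX (D, E) = LL d e n m lX lY (D, E) r :=
        (if_neg hA).trans (if_pos hB)
      have := finrank_caseB (n := n) (m := m) lX lY (D, E) r
      rw [hJ]
      omega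
    · have hJ : Jpiece r d e n m lX lY IX (D, E) = ⊥ := (if_neg hA).trans (if_neg hB)
      rw [hJ, finrank_bot]
      omega
  · rw [Jpiece]
    simp only [finrank_coxPieceXY_zero]
    split_ifs with hA
    · rw [LL_zero_zero, coxPieceXY_zero_zero, Submodule.bot_mul, one_mul, bot_sup_eq]
    · have h3 := hIXHF D
      have h4 := hle D
      have h5 := finrank_IXemb (m := m) IX D
      have f : FiniteDimensional ℂ ↥(IXemb d e n m IX D) :=
        have := finite_coxPieceXY d e n m (D, 0)
        Submodule.finiteDimensional_of_le (IXemb_le IX D)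
      refine (Submodule.finrank_eq_zero.1 ?_).symm
      omega
end
end
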